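/- Let p, q ∈ [1,∞] and α_i ≥ 0, and let the (policy-independent) uncertainty set of player i be the operator-norm ball ℛ_i = {R ∈ ℝ^{𝒜_i×𝒜_{-i}} : ‖R‖_{p→q} ≤ α_i}. Then for every joint policy π ∈ Π, σ_{ℛ_i}(−π_i π_{-i}ᵀ) = α_i ‖π_i‖_{q*} ‖π_{-i}‖_p. Consequently, a joint policy π is a robust Nash equilibrium of the robust matrix game with uncertainty sets ℛ_1,…,ℛ_N if and only if π is a Nash equilibrium of the regularized game with payoffs Ṽ_i(π) = Σ_a p_π(a) r*_i(a) − α_i ‖π_i‖_{q*} ‖π_{-i}‖_p. -/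

import Mathlib

/-!
The support function of the operator-norm ball at `-w yᵀ` is `α ‖w‖_{q*} ‖y‖_p`: by Hölder,
`-wᵀ M y ≤ ‖w‖_{q*} ‖M y‖_q ≤ ‖w‖_{q*} α ‖y‖_p`, and equality holds at the rank-one matrix
`M = -α u vᵀ`, where `u` and `v` are unit-ball vectors attaining equality in Hölder's inequality
against `w` and `y` (`sum_mul_le_lpNorm_mul`, `exists_lpNorm_dual`, `isGreatest_ball`).

Applied to `w = π_i`, `y = π_{-i}` under the identification `𝒜 ≃ 𝒜_i × 𝒜_{-i}`, this is the support
function formula (`isGreatest_suppAt`). Since the supremum is attained, the robust value equals the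
regularized value at every joint policy (`robustValue_eq`). Unilateral deviations are again joint
policies, so the two equilibrium conditions coincide. Nonemptiness of the action sets and
`π_{-i} ≠ 0` follow from the policies being probability vectors.
-/

open scoped ENNReal

/-- The vector `ℓ_p` norm on `ℝ^n`, for `p ∈ [1,∞]`. -/
noncomputable def lpNorm (p : ℝ≥0∞) {n : Type*} [Fintype n] (x : n → ℝ) : ℝ :=
  if p = ∞ then ⨆ i, |x i| else (∑ i, |x i| ^ p.toReal) ^ (1 / p.toReal)

/-- The `ℓ_p → ℓ_q` operator norm of a real matrix:
`‖B‖_{p→q} = sup {‖Bx‖_q : ‖x‖_p = 1}`. -/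
noncomputable def opNorm (p q : ℝ≥0∞) {m n : Type*} [Fintype m] [Fintype n]
    (B : Matrix m n ℝ) : ℝ :=
  sSup {c : ℝ | ∃ x : n → ℝ, lpNorm p x = 1 ∧ c = lpNorm q (B.mulVec x)}

open scoped BigOperators

/-- The probability simplex `Δ(T)` over a finite set `T`. -/
def probSimplex (T : Type*) [Fintype T] : Set (T → ℝ) :=
  {x | (∀ t, 0 ≤ x t) ∧ ∑ t, x t = 1}

/-- `p_π(a) = ∏_j π_j(a_j)`, the probability of joint action `a` under the
product joint policy `π`. -/
noncomputable def jointProb {N : ℕ} {A : Fin N → Type*} [∀ i, Fintype (A i)]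
    (π : (j : Fin N) → A j → ℝ) (a : (j : Fin N) → A j) : ℝ :=
  ∏ j, π j (a j)

/-- Player `i`'s robust value
`V_i(π) = inf_{x ∈ ℛ_i(π)} Σ_a p_π(a) (r*_i(a) + x(a))`. -/
noncomputable def robustValue {N : ℕ} {A : Fin N → Type*} [∀ i, Fintype (A i)]
    (rstar : (i : Fin N) → ((j : Fin N) → A j) → ℝ)
    (R : (i : Fin N) → ((j : Fin N) → A j → ℝ) → Set (((j : Fin N) → A j) → ℝ))
    (i : Fin N) (π : (j : Fin N) → A j → ℝ) : ℝ :=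
  sInf {t : ℝ | ∃ x ∈ R i π,
    t = ∑ a : ((j : Fin N) → A j), jointProb π a * (rstar i a + x a)}

/-- The support function of `ℛ_i(π)` evaluated at `−π_i π_{-i}ᵀ`:
`σ_{ℛ_i(π)}(−π_i π_{-i}ᵀ) = sup_{x ∈ ℛ_i(π)} ⟨x, −π_i π_{-i}ᵀ⟩
  = sup_{x ∈ ℛ_i(π)} (−Σ_a p_π(a) x(a))`. -/
noncomputable def suppAt {N : ℕ} {A : Fin N → Type*} [∀ i, Fintype (A i)]
    (R : (i : Fin N) → ((j : Fin N) → A j → ℝ) → Set (((j : Fin N) → A j) → ℝ))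
    (i : Fin N) (π : (j : Fin N) → A j → ℝ) : ℝ :=
  sSup {t : ℝ | ∃ x ∈ R i π,
    t = -∑ a : ((j : Fin N) → A j), jointProb π a * x a}


/-- `𝒜_{-i} = ∏_{j ≠ i} 𝒜_j`, the joint actions of all players except `i`. -/
abbrev NegActions {N : ℕ} (A : Fin N → Type*) (i : Fin N) : Type _ :=
  (j : {j : Fin N // j ≠ i}) → A j.val

/-- Combine an action `b ∈ 𝒜_i` of player `i` with a joint action
`c ∈ 𝒜_{-i}` of the other players into a joint action in `𝒜`. -/
def combine {N : ℕ} {A : Fin N → Type*} (i : Fin N) (b : A i)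
    (c : NegActions A i) : (j : Fin N) → A j :=
  fun j => if h : j = i then cast (congrArg A h).symm b else c ⟨j, h⟩

/-- `π_{-i}(a_{-i}) = ∏_{j ≠ i} π_j(a_j)`. -/
noncomputable def negPolicy {N : ℕ} {A : Fin N → Type*}
    (π : (j : Fin N) → A j → ℝ) (i : Fin N) : NegActions A i → ℝ :=
  fun c => ∏ j, π j.val (c j)

/-- The `ℓ_p/ℓ_q`-norm regularized value
`Ṽ_i(π) = Σ_a p_π(a) r*_i(a) − α_i ‖π_i‖_{q*} ‖π_{-i}‖_p`. -/
noncomputable def normRegValue {N : ℕ} {A : Fin N → Type*} [∀ i, Fintype (A i)]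
    (p qstar : ℝ≥0∞) (α : Fin N → ℝ)
    (rstar : (i : Fin N) → ((j : Fin N) → A j) → ℝ)
    (i : Fin N) (π : (j : Fin N) → A j → ℝ) : ℝ :=
  (∑ a : ((j : Fin N) → A j), jointProb π a * rstar i a)
    - α i * lpNorm qstar (π i) * lpNorm p (negPolicy π i)

/-! ### The `ℓ_p` norm and its duality -/

lemma lpNorm_top {n : Type*} [Fintype n] (x : n → ℝ) : lpNorm ∞ x = ⨆ i, |x i| := by
  simp [lpNorm]

lemma lpNorm_one {n : Type*} [Fintype n] (x : n → ℝ) : lpNorm 1 x = ∑ i, |x i| := by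
  simp [lpNorm]

lemma lpNorm_of_ne_top {p : ℝ≥0∞} (hp : p ≠ ∞) {n : Type*} [Fintype n] (x : n → ℝ) :
    lpNorm p x = (∑ i, |x i| ^ p.toReal) ^ (1 / p.toReal) := by
  simp [lpNorm, hp]

/-- Identification with Mathlib's norm on `PiLp`, which supplies the norm axioms. -/
lemma lpNorm_eq_norm (p : ℝ≥0∞) [hp : Fact (1 ≤ p)] {n : Type*} [Fintype n] (x : n → ℝ) :
    lpNorm p x = ‖(WithLp.toLp p x : PiLp p fun _ : n => ℝ)‖ := by
  by_cases h : p = ∞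
  · subst h
    rw [lpNorm_top, PiLp.norm_eq_ciSup]
    rfl
  · rw [lpNorm_of_ne_top h, PiLp.norm_eq_sum
      (ENNReal.toReal_pos (zero_lt_one.trans_le hp.out).ne' h)]
    rfl

lemma lpNorm_nonneg {p : ℝ≥0∞} (hp : 1 ≤ p) {n : Type*} [Fintype n] (x : n → ℝ) :
    0 ≤ lpNorm p x := by
  have : Fact (1 ≤ p) := ⟨hp⟩
  rw [lpNorm_eq_norm]
  exact norm_nonneg _

lemma lpNorm_smul {p : ℝ≥0∞} (hp : 1 ≤ p) {n : Type*} [Fintype n] (c : ℝ) (x : n → ℝ) :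
    lpNorm p (c • x) = |c| * lpNorm p x := by
  have : Fact (1 ≤ p) := ⟨hp⟩
  rw [lpNorm_eq_norm, lpNorm_eq_norm, WithLp.toLp_smul, norm_smul, Real.norm_eq_abs]

lemma lpNorm_pos {p : ℝ≥0∞} (hp : 1 ≤ p) {n : Type*} [Fintype n] {x : n → ℝ} (hx : x ≠ 0) :
    0 < lpNorm p x := by
  have : Fact (1 ≤ p) := ⟨hp⟩
  rw [lpNorm_eq_norm]
  exact norm_pos_iff.2 (by simpa using hx)

lemma abs_le_lpNorm_top {n : Type*} [Fintype n] (x : n → ℝ) (i : n) : |x i| ≤ lpNorm ∞ x := by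
  rw [lpNorm_top]
  exact le_ciSup (Set.finite_range fun i => |x i|).bddAbove i

/-- Hölder's inequality, including the endpoint exponents `1` and `∞`. -/
lemma sum_mul_le_lpNorm_mul {p q : ℝ≥0∞} (hpq : p.HolderConjugate q) {n : Type*} [Fintype n]
    (x y : n → ℝ) : ∑ i, x i * y i ≤ lpNorm p x * lpNorm q y := by
  have top_one (x y : n → ℝ) : ∑ i, x i * y i ≤ lpNorm ∞ x * lpNorm 1 y := by
    rw [lpNorm_one, Finset.mul_sum]
    refine Finset.sum_le_sum fun i _ => (le_abs_self _).trans ?_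
    rw [abs_mul]
    exact mul_le_mul_of_nonneg_right (abs_le_lpNorm_top x i) (abs_nonneg _)
  by_cases hp : p = ∞
  · subst hp
    obtain rfl : q = 1 := by
      have := ENNReal.holderConjugate_iff.1 hpq
      simpa using this
    exact top_one x y
  by_cases hq : q = ∞
  · subst hq
    obtain rfl : p = 1 := by
      have := ENNReal.holderConjugate_iff.1 hpq
      simpa using this
    simpa [mul_comm] using top_one y x
  rw [lpNorm_of_ne_top hp, lpNorm_of_ne_top hq]
  exact Real.inner_le_Lp_mul_Lq _ _ _ (ENNReal.HolderConjugate.toReal_of_ne_top hp hq)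

/-- For a nonnegative vector `y`, equality in Hölder's inequality is attained by some vector in the
dual unit ball. Nonemptiness of the index type serves the case `p = ∞`, where the maximizer is a
coordinate vector. -/
lemma exists_lpNorm_dual {p q : ℝ≥0∞} (hpq : p.HolderConjugate q) {n : Type*} [Fintype n]
    [Nonempty n] (y : n → ℝ) (hy : ∀ i, 0 ≤ y i) :
    ∃ u : n → ℝ, lpNorm q u ≤ 1 ∧ ∑ i, u i * y i = lpNorm p y := by
  classical
  by_cases hp : p = ∞
  · subst hp
    obtain rfl : q = 1 := by
      have := ENNReal.holderConjugate_iff.1 hpq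
      simpa using this
    obtain ⟨k, hk⟩ := exists_eq_ciSup_of_finite (f := fun i => |y i|)
    refine ⟨Pi.single k 1, ?_, ?_⟩
    · rw [lpNorm_one, Finset.sum_eq_single k] <;> simp +contextual
    · rw [lpNorm_top, ← hk, abs_of_nonneg (hy k)]
      simp [Pi.single_apply]
  by_cases hq : q = ∞
  · subst hq
    obtain rfl : p = 1 := by
      have := ENNReal.holderConjugate_iff.1 hpq
      simpa using this
    refine ⟨fun _ => 1, ?_, ?_⟩
    · simp [lpNorm_top]
    · simp [lpNorm_one, abs_of_nonneg (hy _)]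
  have hc := ENNReal.HolderConjugate.toReal_of_ne_top hp hq
  obtain ⟨⟨g, hg, hgy⟩, -⟩ :=
    NNReal.isGreatest_Lp Finset.univ (fun i => (y i).toNNReal) hc
  refine ⟨fun i => g i, ?_, ?_⟩
  · rw [lpNorm_of_ne_top hq]
    refine Real.rpow_le_one (Finset.sum_nonneg fun i _ => by positivity) ?_ (by positivity)
    have : ((∑ i, g i ^ q.toReal : NNReal) : ℝ) ≤ 1 := by exact_mod_cast hg
    simpa using this
  · rw [lpNorm_of_ne_top hp]
    have := congrArg NNReal.toReal hgy
    push_cast at this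
    simp only [Real.coe_toNNReal _ (hy _)] at this
    simp only [abs_of_nonneg (hy _), ← this]
    exact Finset.sum_congr rfl fun i _ => mul_comm _ _

/-! ### The operator norm -/

/-- The set whose supremum defines `opNorm` is bounded, so that `opNorm` is a genuine supremum. -/
lemma bddAbove_opNorm {p q : ℝ≥0∞} (hp : 1 ≤ p) (hq : 1 ≤ q) {m n : Type*} [Fintype m]
    [Fintype n] (B : Matrix m n ℝ) :
    BddAbove {c : ℝ | ∃ x : n → ℝ, lpNorm p x = 1 ∧ c = lpNorm q (B.mulVec x)} := by
  have : Fact (1 ≤ p) := ⟨hp⟩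
  have : Fact (1 ≤ q) := ⟨hq⟩
  let L : (PiLp p fun _ : n => ℝ) →L[ℝ] (PiLp q fun _ : m => ℝ) :=
    LinearMap.toContinuousLinearMap
      ((WithLp.linearEquiv q ℝ (m → ℝ)).symm.toLinearMap ∘ₗ B.mulVecLin ∘ₗ
        (WithLp.linearEquiv p ℝ (n → ℝ)).toLinearMap)
  refine ⟨‖L‖, ?_⟩
  rintro c ⟨x, hx, rfl⟩
  have h := L.le_opNorm (WithLp.toLp p x)
  rw [← lpNorm_eq_norm p x, hx, mul_one] at h
  rw [lpNorm_eq_norm]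
  exact h

lemma lpNorm_mulVec_le {p q : ℝ≥0∞} (hp : 1 ≤ p) (hq : 1 ≤ q) {m n : Type*} [Fintype m]
    [Fintype n] (B : Matrix m n ℝ) {x : n → ℝ} (hx : x ≠ 0) :
    lpNorm q (B.mulVec x) ≤ opNorm p q B * lpNorm p x := by
  have hpos := lpNorm_pos hp hx
  have h : lpNorm q (B.mulVec ((lpNorm p x)⁻¹ • x)) ≤ opNorm p q B := by
    refine le_csSup (bddAbove_opNorm hp hq B) ⟨_, ?_, rfl⟩
    rw [lpNorm_smul hp, abs_of_pos (inv_pos.2 hpos), inv_mul_cancel₀ hpos.ne']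
  rwa [Matrix.mulVec_smul, lpNorm_smul hq, abs_of_pos (inv_pos.2 hpos),
    inv_mul_le_iff₀ hpos, mul_comm] at h

/-- The support function of the operator-norm ball at `-w yᵀ`, for nonnegative `w`, `y` with `y ≠ 0`.
The bound is Hölder's inequality; it is attained at the rank-one matrix `-α u vᵀ` with `u`, `v`
dual to `w`, `y`. -/
lemma isGreatest_ball {p q qstar : ℝ≥0∞} (hp : 1 ≤ p) (hq : 1 ≤ q)
    (hqq : q.HolderConjugate qstar) {α : ℝ} (hα : 0 ≤ α) {m n : Type*} [Fintype m] [Fintype n]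
    [Nonempty m] (w : m → ℝ) (y : n → ℝ) (hw : ∀ b, 0 ≤ w b) (hy : ∀ c, 0 ≤ y c) (hy0 : y ≠ 0) :
    IsGreatest {t : ℝ | ∃ M : Matrix m n ℝ, opNorm p q M ≤ α ∧
      t = -∑ b, ∑ c, w b * y c * M b c} (α * lpNorm qstar w * lpNorm p y) := by
  have : Nonempty n := (Function.ne_iff.1 hy0).nonempty
  have hqs : 1 ≤ qstar := hqq.symm.one_le
  have hpp := ENNReal.HolderConjugate.conjExponent hp
  constructor
  · obtain ⟨u, hu, huw⟩ := exists_lpNorm_dual hqq.symm w hw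
    obtain ⟨v, hv, hvy⟩ := exists_lpNorm_dual hpp y hy
    refine ⟨Matrix.of fun b c => -α * (u b * v c), ?_, ?_⟩
    · refine Real.sSup_le ?_ hα
      rintro t ⟨x, hx, rfl⟩
      have hmul : (Matrix.of fun b c => -α * (u b * v c)).mulVec x
          = (-α * ∑ c, v c * x c) • u := by
        ext b
        simp only [Matrix.mulVec, dotProduct, Matrix.of_apply, Pi.smul_apply, smul_eq_mul,
          Finset.mul_sum, Finset.sum_mul]
        exact Finset.sum_congr rfl fun c _ => by ring
      have hvx : |∑ c, v c * x c| ≤ 1 := by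
        have key (z : n → ℝ) (hz : lpNorm p z = 1) : ∑ c, v c * z c ≤ 1 := by
          have := sum_mul_le_lpNorm_mul hpp.symm v z
          rw [hz, mul_one] at this
          exact this.trans hv
        refine abs_le.2 ⟨?_, key x hx⟩
        have := key ((-1 : ℝ) • x) (by rw [lpNorm_smul hp, hx]; norm_num)
        simp only [Pi.smul_apply, smul_eq_mul, neg_mul, one_mul, mul_neg,
          Finset.sum_neg_distrib] at this
        linarith
      rw [hmul, lpNorm_smul hq, abs_mul, abs_neg, abs_of_nonneg hα, mul_assoc]
      exact mul_le_of_le_one_right hα (mul_le_one₀ hvx (lpNorm_nonneg hq u) hu)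
    · rw [← huw, ← hvy, mul_assoc, Finset.sum_mul_sum, Finset.mul_sum, ← Finset.sum_neg_distrib]
      refine Finset.sum_congr rfl fun b _ => ?_
      rw [Finset.mul_sum, ← Finset.sum_neg_distrib]
      refine Finset.sum_congr rfl fun c _ => ?_
      simp only [Matrix.of_apply]
      ring
  · rintro t ⟨M, hM, rfl⟩
    have h1 : -∑ b, ∑ c, w b * y c * M b c = ∑ b, w b * ((-1 : ℝ) • M.mulVec y) b := by
      rw [← Finset.sum_neg_distrib]
      refine Finset.sum_congr rfl fun b _ => ?_
      simp only [Pi.smul_apply, smul_eq_mul, Matrix.mulVec, dotProduct, neg_mul, one_mul,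
        mul_neg, Finset.mul_sum, Finset.sum_neg_distrib]
      exact congrArg Neg.neg (Finset.sum_congr rfl fun c _ => by ring)
    rw [h1]
    calc _ ≤ lpNorm qstar w * lpNorm q ((-1 : ℝ) • M.mulVec y) :=
          sum_mul_le_lpNorm_mul hqq.symm _ _
      _ = lpNorm qstar w * lpNorm q (M.mulVec y) := by rw [lpNorm_smul hq]; norm_num
      _ ≤ lpNorm qstar w * (α * lpNorm p y) := by
          refine mul_le_mul_of_nonneg_left ?_ (lpNorm_nonneg hqs w)
          exact (lpNorm_mulVec_le hp hq M hy0).trans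
            (mul_le_mul_of_nonneg_right hM (lpNorm_nonneg hp y))
      _ = α * lpNorm qstar w * lpNorm p y := by ring

/-! ### Splitting joint actions as `𝒜_i × 𝒜_{-i}` -/

lemma combine_self {N : ℕ} {A : Fin N → Type*} (i : Fin N) (b : A i) (c : NegActions A i) :
    combine i b c i = b := by
  simp [combine]

lemma combine_of_ne {N : ℕ} {A : Fin N → Type*} (i : Fin N) (b : A i) (c : NegActions A i)
    (j : {j : Fin N // j ≠ i}) : combine i b c j.val = c j := by
  simp [combine, j.2]

lemma combine_restrict {N : ℕ} {A : Fin N → Type*} (i : Fin N) (a : (j : Fin N) → A j) :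
    combine i (a i) (fun j => a j.val) = a := by
  funext j
  by_cases h : j = i
  · subst h
    simp [combine]
  · simp [combine, h]

/-- The identification `𝒜_i × 𝒜_{-i} ≃ 𝒜` given by `combine`. -/
def combineEquiv {N : ℕ} (A : Fin N → Type*) (i : Fin N) :
    A i × NegActions A i ≃ ((j : Fin N) → A j) where
  toFun z := combine i z.1 z.2
  invFun a := (a i, fun j => a j.val)
  left_inv z := Prod.ext (combine_self i z.1 z.2) (funext fun j => combine_of_ne i z.1 z.2 j)
  right_inv a := combine_restrict i a

lemma jointProb_combine {N : ℕ} {A : Fin N → Type*} [∀ i, Fintype (A i)]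
    (π : (j : Fin N) → A j → ℝ) (i : Fin N) (b : A i) (c : NegActions A i) :
    jointProb π (combine i b c) = π i b * negPolicy π i c := by
  unfold jointProb negPolicy
  rw [← Finset.mul_prod_erase _ _ (Finset.mem_univ i), combine_self]
  congr 1
  refine (Finset.prod_subtype (p := fun j => j ≠ i) (F := inferInstance)
    (Finset.univ.erase i) (by simp) fun j => π j (combine i b c j)).trans ?_
  simp only [combine_of_ne]

lemma sum_jointProb {N : ℕ} {A : Fin N → Type*} [∀ i, Fintype (A i)]
    (π : (j : Fin N) → A j → ℝ) (i : Fin N) (x : ((j : Fin N) → A j) → ℝ) :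
    ∑ a, jointProb π a * x a = ∑ b, ∑ c, π i b * negPolicy π i c * x (combine i b c) := by
  rw [← (combineEquiv A i).sum_comp, Fintype.sum_prod_type]
  simp only [combineEquiv, Equiv.coe_fn_mk, jointProb_combine]

lemma negPolicy_ne_zero {N : ℕ} {A : Fin N → Type*} [∀ i, Fintype (A i)]
    {π : (j : Fin N) → A j → ℝ} (hπ : ∀ j, π j ∈ probSimplex (A j)) (i : Fin N) :
    negPolicy π i ≠ 0 := by
  have h (j : Fin N) : ∃ a, π j a ≠ 0 := by
    obtain ⟨a, -, ha⟩ := Finset.exists_ne_zero_of_sum_ne_zero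
      ((hπ j).2.symm ▸ one_ne_zero : ∑ t, π j t ≠ 0)
    exact ⟨a, ha⟩
  choose a ha using h
  exact Function.ne_iff.2 ⟨fun j => a j.val, Finset.prod_ne_zero_iff.2 fun j _ => ha j.val⟩

/-! ### Support function and robust value -/

/-- The support function formula for a policy in the product of simplices, in attained form. -/
lemma isGreatest_suppAt {N : ℕ} {A : Fin N → Type*} [∀ i, Fintype (A i)]
    {p q qstar : ℝ≥0∞} (hp : 1 ≤ p) (hq : 1 ≤ q) (hqq : q.HolderConjugate qstar)
    {α : Fin N → ℝ} (hα : ∀ i, 0 ≤ α i)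
    {R : (i : Fin N) → ((j : Fin N) → A j → ℝ) → Set (((j : Fin N) → A j) → ℝ)}
    (hR : ∀ i πp, R i πp = {x | opNorm p q
      (Matrix.of fun (b : A i) (c : NegActions A i) => x (combine i b c)) ≤ α i})
    {π : (j : Fin N) → A j → ℝ} (hπ : ∀ j, π j ∈ probSimplex (A j)) (i : Fin N) :
    IsGreatest {t : ℝ | ∃ x ∈ R i π, t = -∑ a : ((j : Fin N) → A j), jointProb π a * x a}
      (α i * lpNorm qstar (π i) * lpNorm p (negPolicy π i)) := by
  have : Nonempty (A i) := by
    by_contra h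
    have := not_nonempty_iff.1 h
    simpa using (hπ i).2
  convert isGreatest_ball hp hq hqq (hα i) (π i) (negPolicy π i) (hπ i).1
    (fun c => Finset.prod_nonneg fun j _ => (hπ j.val).1 _) (negPolicy_ne_zero hπ i) using 1
  ext t
  simp only [Set.mem_ofPred_eq, hR]
  constructor
  · rintro ⟨x, hx, rfl⟩
    exact ⟨_, hx, by rw [sum_jointProb π i]; rfl⟩
  · rintro ⟨M, hM, rfl⟩
    refine ⟨fun a => M (a i) fun j => a j.val, ?_, ?_⟩
    · simp only [combine_self, combine_of_ne]
      exact hM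
    · rw [sum_jointProb π i]
      simp only [combine_self, combine_of_ne]

lemma robustValue_eq {N : ℕ} {A : Fin N → Type*} [∀ i, Fintype (A i)]
    {p q qstar : ℝ≥0∞} (hp : 1 ≤ p) (hq : 1 ≤ q) (hqq : q.HolderConjugate qstar)
    {α : Fin N → ℝ} (hα : ∀ i, 0 ≤ α i)
    (rstar : (i : Fin N) → ((j : Fin N) → A j) → ℝ)
    {R : (i : Fin N) → ((j : Fin N) → A j → ℝ) → Set (((j : Fin N) → A j) → ℝ)}
    (hR : ∀ i πp, R i πp = {x | opNorm p q
      (Matrix.of fun (b : A i) (c : NegActions A i) => x (combine i b c)) ≤ α i})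
    {π : (j : Fin N) → A j → ℝ} (hπ : ∀ j, π j ∈ probSimplex (A j)) (i : Fin N) :
    robustValue rstar R i π = normRegValue p qstar α rstar i π := by
  obtain ⟨⟨x, hx, hxv⟩, hub⟩ := isGreatest_suppAt hp hq hqq hα hR hπ i
  refine IsLeast.csInf_eq ⟨⟨x, hx, ?_⟩, ?_⟩
  · simp only [mul_add, Finset.sum_add_distrib, normRegValue]
    linarith
  · rintro t ⟨z, hz, rfl⟩
    have := hub ⟨z, hz, rfl⟩
    simp only [mul_add, Finset.sum_add_distrib, normRegValue]
    linarith

/-- Theorem (operator-norm ball uncertainty ↔ `ℓ_p/ℓ_q`-norm regularization):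
for the policy-independent uncertainty sets
`ℛ_i = {R : ‖R‖_{p→q} ≤ α_i}` (viewing `ℝ^𝒜 ≅ ℝ^{𝒜_i×𝒜_{-i}}`),
the support function satisfies
`σ_{ℛ_i}(−π_i π_{-i}ᵀ) = α_i ‖π_i‖_{q*} ‖π_{-i}‖_p` for every `π ∈ Π`,
and consequently `π` is a robust Nash equilibrium iff it is a Nash
equilibrium of the regularized game with payoffs
`Ṽ_i(π) = Σ_a p_π(a) r*_i(a) − α_i ‖π_i‖_{q*} ‖π_{-i}‖_p`. -/
theorem ball_uncertainty_regularization {N : ℕ} {A : Fin N → Type*}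
    [∀ i, Fintype (A i)]
    (p q qstar : ℝ≥0∞) (hp : 1 ≤ p) (hq : 1 ≤ q)
    (hconj : 1 / q + 1 / qstar = 1)
    (α : Fin N → ℝ) (hα : ∀ i, 0 ≤ α i)
    (rstar : (i : Fin N) → ((j : Fin N) → A j) → ℝ)
    (R : (i : Fin N) → ((j : Fin N) → A j → ℝ) → Set (((j : Fin N) → A j) → ℝ))
    (hR : ∀ i πp, R i πp = {x | opNorm p q
      (Matrix.of fun (b : A i) (c : NegActions A i) => x (combine i b c)) ≤ α i}) :
    (∀ π : (j : Fin N) → A j → ℝ, (∀ j, π j ∈ probSimplex (A j)) → ∀ i,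
      suppAt R i π = α i * lpNorm qstar (π i) * lpNorm p (negPolicy π i)) ∧
    (∀ π : (j : Fin N) → A j → ℝ, (∀ j, π j ∈ probSimplex (A j)) →
      ((∀ i, robustValue rstar R i π =
          sSup {t : ℝ | ∃ u ∈ probSimplex (A i),
            t = robustValue rstar R i (Function.update π i u)}) ↔
       (∀ i, normRegValue p qstar α rstar i π =
          sSup {t : ℝ | ∃ u ∈ probSimplex (A i),
            t = normRegValue p qstar α rstar i (Function.update π i u)}))) := by
  have hqq : q.HolderConjugate qstar :=
    ENNReal.holderConjugate_iff.2 (by simpa only [one_div] using hconj)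
  refine ⟨fun π hπ i => (isGreatest_suppAt hp hq hqq hα hR hπ i).csSup_eq, fun π hπ => ?_⟩
  refine forall_congr' fun i => ?_
  have hset : {t : ℝ | ∃ u ∈ probSimplex (A i),
        t = robustValue rstar R i (Function.update π i u)} =
      {t : ℝ | ∃ u ∈ probSimplex (A i),
        t = normRegValue p qstar α rstar i (Function.update π i u)} := by
    ext t
    refine exists_congr fun u => and_congr_right fun hu => ?_
    rw [robustValue_eq hp hq hqq hα rstar hR (fun j => ?_) i]
    obtain rfl | h := eq_or_ne j i
    · simpa using hu
    · simpa [h] using hπ j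
  rw [hset, robustValue_eq hp hq hqq hα rstar hR hπ i]
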